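/- (Lemma 3.2) Let I ⊆ H⁺ be a two-sided ideal of H with S(I) ⊆ I. Then the vertical subspace V_I := {y ∈ Q : can(y) ∈ A ⊗ I} is invariant under the Đurđević braiding: σ(V_I) ⊆ V_I. -/

import Mathlib

/-! The braiding becomes explicit after transport along `can`: with
`Φ(a ⊗ h) = a₍₀₎ ⊗ a₍₁₎S(h)` one has `β = Φ ∘ c̃`, because
`Φ(a a'₍₀₎ ⊗ a'₍₁₎) = a₍₀₎a'₍₀₎ ⊗ a₍₁₎a'₍₁₎S(a'₍₂₎) = a₍₀₎a' ⊗ a₍₁₎`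
(`phi_ctilde`). Hence `can ∘ σ = Φ ∘ can`, and `Φ` maps `A ⊗ I` into itself since `I` is a
left ideal stable under the antipode (`phi_mem_AtI`). -/

open TensorProduct

noncomputable section

variable {k H A : Type*} [Field k] [Ring H] [HopfAlgebra k H] [Ring A] [Algebra k A]

/-- The lifted canonical map `c̃ : A ⊗ A → A ⊗ H`, `c̃(a ⊗ a') = a a'₍₀₎ ⊗ a'₍₁₎`,
for a coaction `δ : A → A ⊗ H`. -/
def ctilde (δ : A →ₐ[k] A ⊗[k] H) : A ⊗[k] A →ₗ[k] A ⊗[k] H :=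
  (TensorProduct.map (LinearMap.mul' k A) LinearMap.id)
    ∘ₗ (TensorProduct.assoc k A A H).symm.toLinearMap
    ∘ₗ (TensorProduct.map LinearMap.id δ.toLinearMap)

/-- The map `β : A ⊗ A → A ⊗ H`, `β(a ⊗ a') = a₍₀₎a' ⊗ a₍₁₎`. -/
def betaMap (δ : A →ₐ[k] A ⊗[k] H) : A ⊗[k] A →ₗ[k] A ⊗[k] H :=
  (TensorProduct.map (LinearMap.mul' k A) LinearMap.id)
    ∘ₗ (TensorProduct.assoc k A A H).symm.toLinearMap
    ∘ₗ (TensorProduct.map LinearMap.id (TensorProduct.comm k H A).toLinearMap)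
    ∘ₗ (TensorProduct.assoc k A H A).toLinearMap
    ∘ₗ (TensorProduct.map δ.toLinearMap LinearMap.id)

/-- The diagonal coaction `δ₂ : A ⊗ A → (A ⊗ A) ⊗ H`,
`δ₂(a ⊗ a') = (a₍₀₎ ⊗ a'₍₀₎) ⊗ a₍₁₎a'₍₁₎`. -/
def delta2 (δ : A →ₐ[k] A ⊗[k] H) : A ⊗[k] A →ₗ[k] (A ⊗[k] A) ⊗[k] H :=
  (TensorProduct.map LinearMap.id (LinearMap.mul' k H))
    ∘ₗ (TensorProduct.tensorTensorTensorComm k A H A H).toLinearMap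
    ∘ₗ (TensorProduct.map δ.toLinearMap δ.toLinearMap)

/-- `J ⊆ A ⊗ A`: the k-span of the balanced relations `ab ⊗ a' − a ⊗ ba'`
with `b` a coinvariant element (`δ b = b ⊗ 1`). -/
def Jrel (δ : A →ₐ[k] A ⊗[k] H) : Submodule k (A ⊗[k] A) :=
  Submodule.span k {x | ∃ a a' b : A, δ b = b ⊗ₜ[k] (1 : H) ∧
    x = (a * b) ⊗ₜ[k] a' - a ⊗ₜ[k] (b * a')}

/-- `A ⊗ I`: the k-span of `{a ⊗ x : a ∈ A, x ∈ I}` inside `A ⊗ H`. -/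
def AtI (A : Type*) [Ring A] [Algebra k A] (I : Submodule k H) :
    Submodule k (A ⊗[k] H) :=
  Submodule.span k {z | ∃ a : A, ∃ h ∈ I, z = a ⊗ₜ[k] h}

/-- Counitality of the coaction `δ` : `(id ⊗ ε) ∘ δ = id` under `A ⊗ k ≅ A`. -/
def Counital (δ : A →ₐ[k] A ⊗[k] H) : Prop :=
  ∀ a : A, (TensorProduct.rid k A)
    (TensorProduct.map LinearMap.id (Coalgebra.counit (R := k) (A := H)) (δ a)) = a

/-- Coassociativity of the coaction `δ` : `(δ ⊗ id) ∘ δ = (id ⊗ Δ) ∘ δ`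
up to the tensor associator. -/
def Coassoc (δ : A →ₐ[k] A ⊗[k] H) : Prop :=
  ∀ a : A, (TensorProduct.assoc k A H H)
      (TensorProduct.map δ.toLinearMap LinearMap.id (δ a))
    = TensorProduct.map LinearMap.id (Coalgebra.comul (R := k) (A := H)) (δ a)

/-- The `σ`-closure `⟨W⟩_σ = Σ_{n ≥ 0} σⁿ(W)` of a subspace `W`. -/
def sclosure {M : Type*} [AddCommGroup M] [Module k M]
    (σ : M →ₗ[k] M) (W : Submodule k M) : Submodule k M :=
  ⨆ n : ℕ, Submodule.map (σ ^ n) W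

/-- The transported braiding `Φ : A ⊗ H → A ⊗ H`, `Φ(a ⊗ h) = a₍₀₎ ⊗ a₍₁₎S(h)`, encoded as
`δ(a) · (1 ⊗ S(h))` in the algebra `A ⊗ H`. -/
def phi (δ : A →ₐ[k] A ⊗[k] H) : A ⊗[k] H →ₗ[k] A ⊗[k] H :=
  LinearMap.mul' k (A ⊗[k] H) ∘ₗ TensorProduct.map δ.toLinearMap
    ((Algebra.TensorProduct.includeRight : H →ₐ[k] A ⊗[k] H).toLinearMap ∘ₗ
      HopfAlgebra.antipode k)

lemma phi_tmul (δ : A →ₐ[k] A ⊗[k] H) (a : A) (h : H) :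
    phi δ (a ⊗ₜ[k] h) = δ a * ((1 : A) ⊗ₜ[k] HopfAlgebra.antipode k h) := by
  simp [phi]

lemma ctilde_tmul (δ : A →ₐ[k] A ⊗[k] H) (a a' : A) :
    ctilde δ (a ⊗ₜ[k] a') = (a ⊗ₜ[k] (1 : H)) * δ a' := by
  simp only [ctilde, LinearMap.comp_apply, TensorProduct.map_tmul, LinearMap.id_apply,
    AlgHom.toLinearMap_apply, LinearEquiv.coe_coe]
  induction δ a' with
  | zero => simp
  | tmul b h => simp
  | add x y hx hy => simp only [TensorProduct.tmul_add, map_add, hx, hy, mul_add]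

lemma betaMap_tmul (δ : A →ₐ[k] A ⊗[k] H) (a a' : A) :
    betaMap δ (a ⊗ₜ[k] a') = δ a * (a' ⊗ₜ[k] (1 : H)) := by
  simp only [betaMap, LinearMap.comp_apply, TensorProduct.map_tmul, LinearMap.id_apply,
    AlgHom.toLinearMap_apply, LinearEquiv.coe_coe]
  induction δ a with
  | zero => simp
  | tmul b h => simp
  | add x y hx hy => simp only [TensorProduct.add_tmul, map_add, hx, hy, add_mul]

/-- `Φ` is left `A`-linear along `δ`. -/
lemma phi_mul (δ : A →ₐ[k] A ⊗[k] H) (a : A) (z : A ⊗[k] H) :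
    phi δ ((a ⊗ₜ[k] (1 : H)) * z) = δ a * phi δ z := by
  induction z with
  | zero => simp
  | tmul b h => simp [phi_tmul, mul_assoc]
  | add x y hx hy => simp only [mul_add, map_add, hx, hy]

/-- `a₍₀₎ ⊗ a₍₁₎S(a₍₂₎) = a ⊗ 1`: coassociativity moves the comultiplication to the second leg,
where the antipode axiom and counitality apply. -/
lemma phi_coaction (δ : A →ₐ[k] A ⊗[k] H) (hcu : Counital δ) (hca : Coassoc δ) (a : A) :
    phi δ (δ a) = a ⊗ₜ[k] (1 : H) := by
  let T : H ⊗[k] H →ₗ[k] H :=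
    LinearMap.mul' k H ∘ₗ TensorProduct.map LinearMap.id (HopfAlgebra.antipode k)
  have h1 (z : A ⊗[k] H) : phi δ z = TensorProduct.map LinearMap.id T
      (TensorProduct.assoc k A H H (TensorProduct.map δ.toLinearMap LinearMap.id z)) := by
    induction z with
    | zero => simp
    | add x y hx hy => simp only [map_add, hx, hy]
    | tmul b h =>
      rw [phi_tmul]
      simp only [TensorProduct.map_tmul, LinearMap.id_apply, AlgHom.toLinearMap_apply]
      induction δ b with
      | zero => simp
      | tmul c g => simp [T]
      | add x y hx hy => simp only [TensorProduct.add_tmul, map_add, hx, hy, add_mul]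
  have h2 (z : A ⊗[k] H) : TensorProduct.map LinearMap.id T
      (TensorProduct.map LinearMap.id (Coalgebra.comul (R := k) (A := H)) z) =
      (TensorProduct.rid k A (TensorProduct.map LinearMap.id
        (Coalgebra.counit (R := k) (A := H)) z)) ⊗ₜ[k] (1 : H) := by
    induction z with
    | zero => simp
    | add x y hx hy => simp only [map_add, hx, hy, TensorProduct.add_tmul]
    | tmul b h =>
      have hT : T (Coalgebra.comul (R := k) h) =
          algebraMap k H (Coalgebra.counit (R := k) h) := by
        simpa [T, LinearMap.lTensor] using HopfAlgebra.mul_antipode_lTensor_comul_apply (R := k) h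
      simp [hT, Algebra.algebraMap_eq_smul_one, TensorProduct.smul_tmul]
  rw [h1, hca, h2, hcu]

lemma phi_ctilde (δ : A →ₐ[k] A ⊗[k] H) (hcu : Counital δ) (hca : Coassoc δ)
    (x : A ⊗[k] A) : phi δ (ctilde δ x) = betaMap δ x := by
  induction x with
  | zero => simp
  | tmul a a' => rw [ctilde_tmul, phi_mul, phi_coaction δ hcu hca, betaMap_tmul]
  | add x y hx hy => simp only [map_add, hx, hy]

lemma phi_mem_AtI (δ : A →ₐ[k] A ⊗[k] H) (I : Submodule k H)
    (hIl : ∀ h : H, ∀ x ∈ I, h * x ∈ I)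
    (hIS : ∀ x ∈ I, HopfAlgebra.antipode (R := k) x ∈ I)
    {z : A ⊗[k] H} (hz : z ∈ AtI A I) : phi δ z ∈ AtI A I := by
  induction hz using Submodule.span_induction with
  | zero => simp
  | add x y _ _ hx hy => rw [map_add]; exact add_mem hx hy
  | smul c x _ hx => rw [map_smul]; exact Submodule.smul_mem _ c hx
  | mem x hx =>
    obtain ⟨a, h, hh, rfl⟩ := hx
    rw [phi_tmul]
    induction δ a with
    | zero => simp
    | add x y hx hy => rw [add_mul]; exact add_mem hx hy
    | tmul c g =>
      rw [Algebra.TensorProduct.tmul_mul_tmul]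
      exact Submodule.subset_span ⟨_, _, hIl g _ (hIS h hh), rfl⟩

/-- Lemma 3.2: for a two-sided ideal `I ⊆ H⁺` with `S(I) ⊆ I`,
the vertical subspace `V_I = can⁻¹(A ⊗ I)` is `σ`-invariant. -/
theorem stmt8 (δ : A →ₐ[k] A ⊗[k] H) (hcu : Counital δ) (hca : Coassoc δ)
    (can : ((A ⊗[k] A) ⧸ Jrel δ) →ₗ[k] A ⊗[k] H)
    (hcan : ∀ x : A ⊗[k] A, can ((Jrel δ).mkQ x) = ctilde δ x)
    (hbij : Function.Bijective can)
    (βbar : ((A ⊗[k] A) ⧸ Jrel δ) →ₗ[k] A ⊗[k] H)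
    (hβ : ∀ x : A ⊗[k] A, βbar ((Jrel δ).mkQ x) = betaMap δ x)
    (σ : ((A ⊗[k] A) ⧸ Jrel δ) →ₗ[k] (A ⊗[k] A) ⧸ Jrel δ)
    (hσ : ∀ y : (A ⊗[k] A) ⧸ Jrel δ, can (σ y) = βbar y)
    (I : Submodule k H)
    (hI : I ≤ LinearMap.ker (Coalgebra.counit (R := k) (A := H)))
    (hIl : ∀ h : H, ∀ x ∈ I, h * x ∈ I)
    (hIr : ∀ h : H, ∀ x ∈ I, x * h ∈ I)
    (hIS : ∀ x ∈ I, HopfAlgebra.antipode (R := k) x ∈ I) :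
    ∀ y : (A ⊗[k] A) ⧸ Jrel δ, can y ∈ AtI A I → can (σ y) ∈ AtI A I := by
  intro y hy
  obtain ⟨x, rfl⟩ := (Jrel δ).mkQ_surjective y
  rw [hσ, hβ, ← phi_ctilde δ hcu hca, ← hcan]
  exact phi_mem_AtI δ I hIl hIS hy

end
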